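/- arXiv:1301.4861 — 3 statements merged into one kernel-verified Lean document; each statement's English description precedes it below -/
import Mathlib

section
/- Let X and Y be symmetric positive definite real n×n matrices. Let R be an invertible n×n matrix with Y = RRᵀ, let U be an orthogonal n×n matrix and Σ a diagonal n×n matrix with strictly positive diagonal entries such that RᵀXR = UΣ²Uᵀ. Define T = Σ^{1/2}UᵀR⁻¹, where Σ^{1/2} is the entrywise square root of the diagonal of Σ. Then T is invertible with T⁻¹ = RUΣ^{−1/2}, and both transformed matrices coincide with Σ: (T⁻¹)ᵀXT⁻¹ = Σ and TYTᵀ = Σ. -/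
open Matrix

/-- Let `X`, `Y` be symmetric positive definite real `n × n` matrices,
`Y = R Rᵀ` with `R` invertible, and `Rᵀ X R = U Σ² Uᵀ` with `U` orthogonal and
`Σ = diagonal σ` with strictly positive diagonal entries. Then
`T = Σ^(1/2) Uᵀ R⁻¹` is invertible with inverse `R U Σ^(-1/2)`, and
`(T⁻¹)ᵀ X T⁻¹ = Σ` and `T Y Tᵀ = Σ`. -/
theorem sector_balancing_transformation {n : ℕ}
    (X Y : Matrix (Fin n) (Fin n) ℝ) (hX : X.PosDef) (hY : Y.PosDef)
    (R : Matrix (Fin n) (Fin n) ℝ) (hR : IsUnit R.det) (hYR : Y = R * Rᵀ)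
    (U : Matrix (Fin n) (Fin n) ℝ) (hU₁ : U * Uᵀ = 1) (hU₂ : Uᵀ * U = 1)
    (σ : Fin n → ℝ) (hσ : ∀ i, 0 < σ i)
    (hSVD : Rᵀ * X * R = U * (Matrix.diagonal σ * Matrix.diagonal σ) * Uᵀ) :
    (Matrix.diagonal (fun i => Real.sqrt (σ i)) * Uᵀ * R⁻¹)
        * (R * U * Matrix.diagonal (fun i => (Real.sqrt (σ i))⁻¹)) = 1
    ∧ (R * U * Matrix.diagonal (fun i => (Real.sqrt (σ i))⁻¹))
        * (Matrix.diagonal (fun i => Real.sqrt (σ i)) * Uᵀ * R⁻¹) = 1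
    ∧ (R * U * Matrix.diagonal (fun i => (Real.sqrt (σ i))⁻¹))ᵀ * X
        * (R * U * Matrix.diagonal (fun i => (Real.sqrt (σ i))⁻¹)) = Matrix.diagonal σ
    ∧ (Matrix.diagonal (fun i => Real.sqrt (σ i)) * Uᵀ * R⁻¹) * Y
        * (Matrix.diagonal (fun i => Real.sqrt (σ i)) * Uᵀ * R⁻¹)ᵀ = Matrix.diagonal σ := by
  have h0 : ∀ i, Real.sqrt (σ i) ≠ 0 := fun i => (Real.sqrt_pos.mpr (hσ i)).ne'
  have hs : ∀ i, Real.sqrt (σ i) * Real.sqrt (σ i) = σ i :=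
    fun i => Real.mul_self_sqrt (hσ i).le
  have hDt : (Matrix.diagonal (fun i => Real.sqrt (σ i)))ᵀ
      = Matrix.diagonal (fun i => Real.sqrt (σ i)) := Matrix.diagonal_transpose _
  have hEt : (Matrix.diagonal (fun i => (Real.sqrt (σ i))⁻¹))ᵀ
      = Matrix.diagonal (fun i => (Real.sqrt (σ i))⁻¹) := Matrix.diagonal_transpose _
  have hDE : Matrix.diagonal (fun i => Real.sqrt (σ i))
      * Matrix.diagonal (fun i => (Real.sqrt (σ i))⁻¹) = 1 := by
    rw [Matrix.diagonal_mul_diagonal, ← Matrix.diagonal_one]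
    congr 1; funext i; exact mul_inv_cancel₀ (h0 i)
  have hDD : Matrix.diagonal (fun i => Real.sqrt (σ i))
      * Matrix.diagonal (fun i => Real.sqrt (σ i)) = Matrix.diagonal σ := by
    rw [Matrix.diagonal_mul_diagonal]
    congr 1; funext i; exact hs i
  generalize Matrix.diagonal (fun i => Real.sqrt (σ i)) = D at *
  generalize Matrix.diagonal (fun i => (Real.sqrt (σ i))⁻¹) = E at *
  have hED : E * D = 1 := mul_eq_one_comm.mp hDE
  have hRR : R⁻¹ * R = 1 := Matrix.nonsing_inv_mul R hR
  have hRt : Rᵀ * (R⁻¹)ᵀ = 1 := by rw [← Matrix.transpose_mul, hRR, Matrix.transpose_one]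
  have h1 : (D * Uᵀ * R⁻¹) * (R * U * E) = 1 := by
    calc _ = D * (Uᵀ * ((R⁻¹ * R) * U)) * E := by simp only [Matrix.mul_assoc]
      _ = 1 := by rw [hRR, Matrix.one_mul, hU₂, Matrix.mul_one, hDE]
  refine ⟨h1, mul_eq_one_comm.mp h1, ?_, ?_⟩
  · rw [Matrix.transpose_mul, Matrix.transpose_mul, hEt]
    calc _ = E * (Uᵀ * (Rᵀ * X * R) * U) * E := by simp only [Matrix.mul_assoc]
      _ = E * ((Uᵀ * U) * ((D * D) * (D * D)) * (Uᵀ * U)) * E := by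
        rw [hSVD, hDD]; simp only [Matrix.mul_assoc]
      _ = (E * D) * (D * D) * (D * E) := by
        rw [hU₂, Matrix.one_mul, Matrix.mul_one]; simp only [Matrix.mul_assoc]
      _ = _ := by rw [hED, hDE, Matrix.one_mul, Matrix.mul_one, hDD]
  · rw [Matrix.transpose_mul, Matrix.transpose_mul, hDt, Matrix.transpose_transpose, hYR]
    calc _ = D * (Uᵀ * ((R⁻¹ * R) * (Rᵀ * (R⁻¹)ᵀ)) * U) * D := by simp only [Matrix.mul_assoc]
      _ = _ := by rw [hRR, hRt, Matrix.mul_one, Matrix.mul_one, hU₂, Matrix.mul_one, hDD]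
end

section
/- Let a ≤ b be real numbers, set c = (a+b)/2, and let A, B, C, D be real matrices (A of size n×n, B of size n×m, C of size m×n, D of size m×m) with P = DᵀD − c(D + Dᵀ) + ab·I invertible. Suppose the symmetric positive definite matrices X and Y solve, respectively, the X-ARE AᵀX + XA − (XB − Cᵀ(cI − D))P⁻¹(XB − Cᵀ(cI − D))ᵀ + CᵀC = 0 and the Y-ARE AY + YAᵀ − (YCᵀ − B(cI − D)ᵀ)P⁻¹(YCᵀ − B(cI − D)ᵀ)ᵀ + BBᵀ = 0. Let R be invertible with Y = RRᵀ, let U be orthogonal and Σ diagonal with strictly positive diagonal entries such that RᵀXR = UΣ²Uᵀ, and set T = Σ^{1/2}UᵀR⁻¹. Then Σ solves both the X-ARE and the Y-ARE for the transformed realisation (TAT⁻¹, TB, CT⁻¹, D); in particular, the two Riccati solutions of the transformed realisation are equal and diagonal. -/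
open Matrix

theorem aux_x {n m : ℕ} (A T V S : Matrix (Fin n) (Fin n) ℝ) (B : Matrix (Fin n) (Fin m) ℝ)
    (C : Matrix (Fin m) (Fin n) ℝ) (E Q : Matrix (Fin m) (Fin m) ℝ)
    (h1 : T * V = 1) (X : Matrix (Fin n) (Fin n) ℝ) (hX : X = Tᵀ * S * T)
    (h : Aᵀ * X + X * A - (X * B - Cᵀ * E) * Q * (X * B - Cᵀ * E)ᵀ + Cᵀ * C = 0) :
    (T * A * V)ᵀ * S + S * (T * A * V)
      - (S * (T * B) - (C * V)ᵀ * E) * Q * (S * (T * B) - (C * V)ᵀ * E)ᵀ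
      + (C * V)ᵀ * (C * V) = 0 := by
  have h2 : Vᵀ * Tᵀ = 1 := by rw [← transpose_mul, h1, transpose_one]
  have e1 : S * (T * B) - (C * V)ᵀ * E = Vᵀ * (X * B - Cᵀ * E) := by
    rw [hX, Matrix.mul_sub, transpose_mul]
    simp only [← Matrix.mul_assoc, h2, Matrix.one_mul]
  have e2 : S * (T * A * V) = Vᵀ * (X * A) * V := by
    rw [hX]
    simp only [← Matrix.mul_assoc, h2, Matrix.one_mul]
  have e3 : (T * A * V)ᵀ * S = Vᵀ * (Aᵀ * X) * V := by
    rw [hX]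
    simp only [transpose_mul, Matrix.mul_assoc, h1, Matrix.mul_one]
  have key := congrArg (fun M => Vᵀ * M * V) h
  rw [e1, e2, e3]
  generalize X * B - Cᵀ * E = G at *
  simp only [Matrix.mul_add, Matrix.mul_sub, Matrix.add_mul, Matrix.sub_mul, Matrix.mul_zero,
    Matrix.zero_mul, transpose_mul, transpose_transpose, Matrix.mul_assoc] at key ⊢
  exact key

theorem aux_y {n m : ℕ} (A T V S : Matrix (Fin n) (Fin n) ℝ) (B : Matrix (Fin n) (Fin m) ℝ)
    (C : Matrix (Fin m) (Fin n) ℝ) (E Q : Matrix (Fin m) (Fin m) ℝ)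
    (h1 : T * V = 1) (Y : Matrix (Fin n) (Fin n) ℝ) (hY : T * Y * Tᵀ = S)
    (h : A * Y + Y * Aᵀ - (Y * Cᵀ - B * E) * Q * (Y * Cᵀ - B * E)ᵀ + B * Bᵀ = 0) :
    (T * A * V) * S + S * (T * A * V)ᵀ
      - (S * (C * V)ᵀ - (T * B) * E) * Q * (S * (C * V)ᵀ - (T * B) * E)ᵀ
      + (T * B) * (T * B)ᵀ = 0 := by
  have h3 : V * T = 1 := mul_eq_one_comm.mp h1
  have h2 : Y = V * S * Vᵀ := by
    have h4 : Tᵀ * Vᵀ = 1 := by rw [← transpose_mul, h3, transpose_one]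
    rw [← hY]
    simp only [Matrix.mul_assoc, h4, Matrix.mul_one]
    rw [← Matrix.mul_assoc, h3, Matrix.one_mul]
  have := aux_x Aᵀ Vᵀ Tᵀ S Cᵀ Bᵀ E Q (by rw [← transpose_mul, h1, transpose_one]) Y
    (by rw [h2, transpose_transpose]) (by simpa only [transpose_transpose] using h)
  simpa only [transpose_mul, transpose_transpose, Matrix.mul_assoc] using this

/-- Suppose symmetric positive definite `X` and `Y` solve respectively the X-ARE and
the Y-ARE for the realisation `(A, B, C, D)` with sector bounds `a ≤ b`, `c = (a+b)/2` and
`P = Dᵀ D − c (D + Dᵀ) + a b I` invertible. Let `Y = R Rᵀ` with `R` invertible,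
`Rᵀ X R = U Σ² Uᵀ` with `U` orthogonal and `Σ = diagonal σ` positive, and
`T = Σ^(1/2) Uᵀ R⁻¹`. Then `Σ` solves both the X-ARE and the Y-ARE for the transformed
realisation `(T A T⁻¹, T B, C T⁻¹, D)`: the two Riccati solutions of the transformed
realisation coincide and are diagonal. -/
theorem sector_balanced_realisation {n m : ℕ} (a b : ℝ) (hab : a ≤ b)
    (A : Matrix (Fin n) (Fin n) ℝ) (B : Matrix (Fin n) (Fin m) ℝ)
    (C : Matrix (Fin m) (Fin n) ℝ) (D : Matrix (Fin m) (Fin m) ℝ)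
    (c : ℝ) (hc : c = (a + b) / 2)
    (P : Matrix (Fin m) (Fin m) ℝ)
    (hP : P = Dᵀ * D - c • (D + Dᵀ) + (a * b) • (1 : Matrix (Fin m) (Fin m) ℝ))
    (hPinv : IsUnit P.det)
    (X Y : Matrix (Fin n) (Fin n) ℝ) (hX : X.PosDef) (hY : Y.PosDef)
    (hXARE : Aᵀ * X + X * A
        - (X * B - Cᵀ * (c • (1 : Matrix (Fin m) (Fin m) ℝ) - D)) * P⁻¹
          * (X * B - Cᵀ * (c • (1 : Matrix (Fin m) (Fin m) ℝ) - D))ᵀ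
        + Cᵀ * C = 0)
    (hYARE : A * Y + Y * Aᵀ
        - (Y * Cᵀ - B * (c • (1 : Matrix (Fin m) (Fin m) ℝ) - D)ᵀ) * P⁻¹
          * (Y * Cᵀ - B * (c • (1 : Matrix (Fin m) (Fin m) ℝ) - D)ᵀ)ᵀ
        + B * Bᵀ = 0)
    (R : Matrix (Fin n) (Fin n) ℝ) (hR : IsUnit R.det) (hYR : Y = R * Rᵀ)
    (U : Matrix (Fin n) (Fin n) ℝ) (hU₁ : U * Uᵀ = 1) (hU₂ : Uᵀ * U = 1)
    (σ : Fin n → ℝ) (hσ : ∀ i, 0 < σ i)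
    (hSVD : Rᵀ * X * R = U * (Matrix.diagonal σ * Matrix.diagonal σ) * Uᵀ)
    (T : Matrix (Fin n) (Fin n) ℝ)
    (hT : T = Matrix.diagonal (fun i => Real.sqrt (σ i)) * Uᵀ * R⁻¹) :
    ((T * A * T⁻¹)ᵀ * Matrix.diagonal σ + Matrix.diagonal σ * (T * A * T⁻¹)
      - (Matrix.diagonal σ * (T * B) - (C * T⁻¹)ᵀ * (c • (1 : Matrix (Fin m) (Fin m) ℝ) - D))
          * P⁻¹
          * (Matrix.diagonal σ * (T * B) - (C * T⁻¹)ᵀ * (c • (1 : Matrix (Fin m) (Fin m) ℝ) - D))ᵀ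
      + (C * T⁻¹)ᵀ * (C * T⁻¹) = 0)
    ∧ ((T * A * T⁻¹) * Matrix.diagonal σ + Matrix.diagonal σ * (T * A * T⁻¹)ᵀ
      - (Matrix.diagonal σ * (C * T⁻¹)ᵀ - (T * B) * (c • (1 : Matrix (Fin m) (Fin m) ℝ) - D)ᵀ)
          * P⁻¹
          * (Matrix.diagonal σ * (C * T⁻¹)ᵀ - (T * B) * (c • (1 : Matrix (Fin m) (Fin m) ℝ) - D)ᵀ)ᵀ
      + (T * B) * (T * B)ᵀ = 0) := by
  have hR1 : R⁻¹ * R = 1 := nonsing_inv_mul R hR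
  have hR2 : R * R⁻¹ = 1 := mul_nonsing_inv R hR
  have hR3 : Rᵀ * (R⁻¹)ᵀ = 1 := by rw [← transpose_mul, hR1, transpose_one]
  have hR4 : (R⁻¹)ᵀ * Rᵀ = 1 := by rw [← transpose_mul, hR2, transpose_one]
  have hS : diagonal (fun i => Real.sqrt (σ i)) * diagonal (fun i => Real.sqrt (σ i))
      = diagonal σ := by
    rw [diagonal_mul_diagonal]
    congr 1
    funext i
    exact Real.mul_self_sqrt (hσ i).le
  have hS2 : diagonal (fun i => Real.sqrt (σ i)) * diagonal σ
      * diagonal (fun i => Real.sqrt (σ i)) = diagonal σ * diagonal σ := by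
    rw [← hS]
    simp only [Matrix.mul_assoc]
  have hTY : T * Y * Tᵀ = diagonal σ := by
    calc T * Y * Tᵀ = diagonal (fun i => Real.sqrt (σ i)) * (Uᵀ * ((R⁻¹ * R) * (Rᵀ * (R⁻¹)ᵀ)) * U)
          * diagonal (fun i => Real.sqrt (σ i)) := by
          rw [hT, hYR]
          simp only [transpose_mul, transpose_transpose, diagonal_transpose, Matrix.mul_assoc]
      _ = diagonal σ := by
          rw [hR1, hR3, Matrix.mul_one, Matrix.mul_one, hU₂, Matrix.mul_one, hS]
  have hXT : X = Tᵀ * diagonal σ * T := by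
    calc X = ((R⁻¹)ᵀ * Rᵀ) * X * (R * R⁻¹) := by
          rw [hR4, hR2, Matrix.one_mul, Matrix.mul_one]
      _ = (R⁻¹)ᵀ * (Rᵀ * X * R) * R⁻¹ := by simp only [Matrix.mul_assoc]
      _ = Tᵀ * diagonal σ * T := by
          rw [hSVD, hT, ← hS2]
          simp only [transpose_mul, transpose_transpose, diagonal_transpose, Matrix.mul_assoc]
  have hdet : IsUnit T.det := by
    have h := congrArg det hTY
    rw [det_mul, det_mul, det_diagonal] at h
    have hp : ∏ i, σ i ≠ 0 := (Finset.prod_pos fun i _ => hσ i).ne'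
    rw [isUnit_iff_ne_zero]
    intro h0
    rw [h0, zero_mul, zero_mul] at h
    exact hp h.symm
  have hTV : T * T⁻¹ = 1 := mul_nonsing_inv T hdet
  exact ⟨aux_x A T T⁻¹ _ B C _ _ hTV X hXT hXARE, aux_y A T T⁻¹ _ B C _ _ hTV Y hTY hYARE⟩
end

section
/- Let H₁ and H₂ be complex l×l matrices and let a₁ ≤ b₁ and a₂ ≤ b₂ be real numbers. If H₁ is in sector [a₁,b₁] and H₂ is in sector [a₂,b₂], then H₁ + H₂ is in sector [a₁+a₂, b₁+b₂], i.e. Herm[(H₁+H₂ − (a₁+a₂)I)*(H₁+H₂ − (b₁+b₂)I)] is negative semidefinite. -/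
open Matrix
open scoped ComplexOrder

lemma sector_degenerate {l : ℕ} (H : Matrix (Fin l) (Fin l) ℂ) (a : ℝ)
    (hH : (-((1 / 2 : ℂ) •
        ((H - (a : ℂ) • (1 : Matrix (Fin l) (Fin l) ℂ))ᴴ
            * (H - (a : ℂ) • (1 : Matrix (Fin l) (Fin l) ℂ))
          + (H - (a : ℂ) • (1 : Matrix (Fin l) (Fin l) ℂ))ᴴ
            * (H - (a : ℂ) • (1 : Matrix (Fin l) (Fin l) ℂ))))).PosSemidef) :
    H = (a : ℂ) • (1 : Matrix (Fin l) (Fin l) ℂ) := by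
  rw [← sub_eq_zero]
  generalize H - (a : ℂ) • (1 : Matrix (Fin l) (Fin l) ℂ) = K at *
  have e : (-((1 / 2 : ℂ) • (Kᴴ * K + Kᴴ * K))) = -(Kᴴ * K) := by module
  rw [e] at hH
  have h1 := hH.trace_nonneg
  have h2 := (Matrix.posSemidef_conjTranspose_mul_self K).trace_nonneg
  rw [Matrix.trace_neg] at h1
  exact Matrix.trace_conjTranspose_mul_self_eq_zero_iff.1
    (le_antisymm (neg_nonneg.1 h1) h2)

/-- If `H₁` is in sector `[a₁, b₁]` and `H₂` is in sector `[a₂, b₂]`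
(negative semidefiniteness of the corresponding Hermitian parts), then `H₁ + H₂` is in
sector `[a₁ + a₂, b₁ + b₂]`. -/
theorem sector_add {l : ℕ} (H₁ H₂ : Matrix (Fin l) (Fin l) ℂ) (a₁ b₁ a₂ b₂ : ℝ)
    (ha₁b₁ : a₁ ≤ b₁) (ha₂b₂ : a₂ ≤ b₂)
    (hH₁ : (-((1 / 2 : ℂ) •
        ((H₁ - (a₁ : ℂ) • (1 : Matrix (Fin l) (Fin l) ℂ))ᴴ
            * (H₁ - (b₁ : ℂ) • (1 : Matrix (Fin l) (Fin l) ℂ))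
          + (H₁ - (b₁ : ℂ) • (1 : Matrix (Fin l) (Fin l) ℂ))ᴴ
            * (H₁ - (a₁ : ℂ) • (1 : Matrix (Fin l) (Fin l) ℂ))))).PosSemidef)
    (hH₂ : (-((1 / 2 : ℂ) •
        ((H₂ - (a₂ : ℂ) • (1 : Matrix (Fin l) (Fin l) ℂ))ᴴ
            * (H₂ - (b₂ : ℂ) • (1 : Matrix (Fin l) (Fin l) ℂ))
          + (H₂ - (b₂ : ℂ) • (1 : Matrix (Fin l) (Fin l) ℂ))ᴴ
            * (H₂ - (a₂ : ℂ) • (1 : Matrix (Fin l) (Fin l) ℂ))))).PosSemidef) :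
    (-((1 / 2 : ℂ) •
        ((H₁ + H₂ - ((a₁ + a₂ : ℝ) : ℂ) • (1 : Matrix (Fin l) (Fin l) ℂ))ᴴ
            * (H₁ + H₂ - ((b₁ + b₂ : ℝ) : ℂ) • (1 : Matrix (Fin l) (Fin l) ℂ))
          + (H₁ + H₂ - ((b₁ + b₂ : ℝ) : ℂ) • (1 : Matrix (Fin l) (Fin l) ℂ))ᴴ
            * (H₁ + H₂ - ((a₁ + a₂ : ℝ) : ℂ) • (1 : Matrix (Fin l) (Fin l) ℂ))))).PosSemidef := by
  rcases ha₁b₁.eq_or_lt with rfl | h1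
  · have := sector_degenerate H₁ a₁ hH₁
    subst this
    have e : ∀ c : ℝ, (a₁ : ℂ) • (1 : Matrix (Fin l) (Fin l) ℂ) + H₂
        - ((a₁ + c : ℝ) : ℂ) • (1 : Matrix (Fin l) (Fin l) ℂ)
        = H₂ - (c : ℂ) • (1 : Matrix (Fin l) (Fin l) ℂ) := by
      intro c; push_cast; module
    rw [e, e]; exact hH₂
  rcases ha₂b₂.eq_or_lt with rfl | h2
  · have := sector_degenerate H₂ a₂ hH₂
    subst this
    have e : ∀ c : ℝ, H₁ + (a₂ : ℂ) • (1 : Matrix (Fin l) (Fin l) ℂ)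
        - ((c + a₂ : ℝ) : ℂ) • (1 : Matrix (Fin l) (Fin l) ℂ)
        = H₁ - (c : ℂ) • (1 : Matrix (Fin l) (Fin l) ℂ) := by
      intro c; push_cast; module
    rw [e, e]; exact hH₁
  have p1 : 0 < b₁ - a₁ := sub_pos.2 h1
  have p2 : 0 < b₂ - a₂ := sub_pos.2 h2
  have q1 : (b₁ : ℂ) - a₁ ≠ 0 := by exact_mod_cast p1.ne'
  have q2 : (b₂ : ℂ) - a₂ ≠ 0 := by exact_mod_cast p2.ne'
  have c1 : (0 : ℂ) ≤ (((b₁ - a₁ + (b₂ - a₂)) / (b₁ - a₁) : ℝ) : ℂ) := by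
    rw [Complex.zero_le_real]; positivity
  have c2 : (0 : ℂ) ≤ (((b₁ - a₁ + (b₂ - a₂)) / (b₂ - a₂) : ℝ) : ℂ) := by
    rw [Complex.zero_le_real]; positivity
  have c3 : (0 : ℂ) ≤ ((1 / ((b₁ - a₁) * (b₂ - a₂)) : ℝ) : ℂ) := by
    rw [Complex.zero_le_real]; positivity
  have key := ((hH₁.smul c1).add (hH₂.smul c2)).add
    ((Matrix.posSemidef_conjTranspose_mul_self
      (((b₂ : ℂ) - a₂) • (H₁ - (((a₁ : ℂ) + b₁) / 2) • (1 : Matrix (Fin l) (Fin l) ℂ))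
        - ((b₁ : ℂ) - a₁) • (H₂ - (((a₂ : ℂ) + b₂) / 2) • (1 : Matrix (Fin l) (Fin l) ℂ)))).smul c3)
  convert key using 1
  simp only [conjTranspose_sub, conjTranspose_add, conjTranspose_smul, conjTranspose_one,
    star_sub, star_add, star_div₀, star_ofNat, Complex.star_def, Complex.conj_ofReal,
    sub_mul, mul_sub, add_mul, mul_add, smul_mul_assoc, mul_smul_comm, mul_one, one_mul,
    smul_sub, smul_add]
  push_cast
  match_scalars <;> field_simp <;> ring
end
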